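/- arXiv:2104.12066 — 2 statements merged into one kernel-verified Lean document; each statement's English description precedes it below -/
import Mathlib

section
/- Let T be a nonempty closed subset of 2^ω and let Q be a set of nonempty strings such that for every string σ with T ∩ ⟦σ⟧ ≠ ∅ there exists τ ∈ Q with T ∩ ⟦σ ++ τ⟧ ≠ ∅. Then there exists x ∈ T such that x ∈ ⟦Q^n⟧ for every n ≥ 1. -/
open MeasureTheory

/-- The first `n` bits of `x ∈ 2^ω`, as a string. -/
def seg (x : ℕ → Bool) (n : ℕ) : List Bool := List.ofFn (fun i : Fin n => x i)

/-- The cylinder of a string: all `x ∈ 2^ω` with `σ` as a prefix. -/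
def cyl (σ : List Bool) : Set (ℕ → Bool) := {x | seg x σ.length = σ}

/-- The open set generated by a set of strings. -/
def cylSet (V : Set (List Bool)) : Set (ℕ → Bool) := ⋃ σ ∈ V, cyl σ

/-- Concatenation of sets of strings: `Q∗R = {σ ++ ρ : σ ∈ Q, ρ ∈ R}`. -/
def starSet (Q R : Set (List Bool)) : Set (List Bool) :=
  {l | ∃ σ ∈ Q, ∃ ρ ∈ R, l = σ ++ ρ}

/-- Iterated concatenation: `Q^1 = Q`, `Q^{n+1} = Q^n ∗ Q`
(with `Q^0 = {[]}`, the empty string). -/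
def powSet (Q : Set (List Bool)) : ℕ → Set (List Bool)
  | 0 => {[]}
  | n + 1 => starSet (powSet Q n) Q

theorem mem_cyl_iff (σ : List Bool) (x : ℕ → Bool) :
    x ∈ cyl σ ↔ ∀ (i : ℕ) (hi : i < σ.length), x i = σ[i] := by
  unfold cyl seg
  rw [Set.mem_setOf_eq]
  constructor
  · intro hx i hi
    have := List.getElem_of_eq hx (i := i) (by simpa using hi)
    simpa using this
  · intro hx
    apply List.ext_getElem
    · simp
    · intro i h1 h2
      simpa using hx i h2

theorem isClosed_cyl (σ : List Bool) : IsClosed (cyl σ) := by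
  have : cyl σ = ⋂ (i : ℕ) (hi : i < σ.length), {x | x i = σ[i]} := by
    ext x
    simp [mem_cyl_iff]
  rw [this]
  exact isClosed_iInter fun i => isClosed_iInter fun hi =>
    isClosed_eq (continuous_apply i) continuous_const

theorem cyl_append_subset (σ τ : List Bool) : cyl (σ ++ τ) ⊆ cyl σ := by
  intro x hx
  rw [mem_cyl_iff] at hx ⊢
  intro i hi
  rw [hx i (by simp; omega), List.getElem_append_left hi]

/-- Let `T` be a nonempty closed subset of Cantor space and `Q` a set of
nonempty strings such that every cylinder `⟦σ⟧` meeting `T` has a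
sub-cylinder `⟦σ ++ τ⟧` (with `τ ∈ Q`) meeting `T`.  Then some `x ∈ T`
belongs to `⟦Q^n⟧` for every `n ≥ 1`. -/
theorem path_in_all_powSet (T : Set (ℕ → Bool)) (hTc : IsClosed T)
    (hTne : T.Nonempty)
    (Q : Set (List Bool)) (hQ : ∀ τ ∈ Q, τ ≠ [])
    (h : ∀ σ : List Bool, (T ∩ cyl σ).Nonempty →
      ∃ τ ∈ Q, (T ∩ cyl (σ ++ τ)).Nonempty) :
    ∃ x ∈ T, ∀ n : ℕ, x ∈ cylSet (powSet Q (n + 1)) := by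
  choose f hfQ hf using h
  have h0 : (T ∩ cyl []).Nonempty := by
    obtain ⟨x, hx⟩ := hTne
    exact ⟨x, hx, by simp [mem_cyl_iff]⟩
  let s : ℕ → {σ : List Bool // (T ∩ cyl σ).Nonempty} := fun n =>
    Nat.rec ⟨[], h0⟩ (fun _ p => ⟨p.1 ++ f p.1 p.2, hf p.1 p.2⟩) n
  have hs : ∀ n, (s (n + 1)).1 = (s n).1 ++ f (s n).1 (s n).2 := fun n => rfl
  have hpow : ∀ n, (s n).1 ∈ powSet Q n := by
    intro n
    induction n with
    | zero => exact rfl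
    | succ n ih => exact ⟨_, ih, _, hfQ _ (s n).2, hs n⟩
  obtain ⟨x, hx⟩ := IsCompact.nonempty_iInter_of_sequence_nonempty_isCompact_isClosed
    (fun n => T ∩ cyl (s n).1)
    (fun n => by
      show T ∩ cyl (s (n + 1)).1 ⊆ T ∩ cyl (s n).1
      rw [hs]
      exact Set.inter_subset_inter_right _ (cyl_append_subset _ _))
    (fun n => (s n).2)
    ((hTc.inter (isClosed_cyl _)).isCompact)
    (fun n => hTc.inter (isClosed_cyl _))
  rw [Set.mem_iInter] at hx
  refine ⟨x, (hx 0).1, fun n => ?_⟩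
  exact Set.mem_biUnion (hpow (n + 1)) (hx (n + 1)).2
end

section
/- For every natural number n and every forcing condition p = (F_p, T_p, d_p), there exists a forcing condition q = (F_q, T_q, d_q) extending p such that max{1 − μ_τ([T_q]) : τ ∈ F_q} < (1/(n+1)) · min{1 − d_q(τ) : τ ∈ F_q}. -/
open MeasureTheory

/-- A tree: a set of strings closed under prefixes. -/
def IsTree (T : Set (List Bool)) : Prop :=
  ∀ σ ∈ T, ∀ τ : List Bool, τ <+: σ → τ ∈ T

/-- The paths of a tree: those `x ∈ 2^ω` all of whose prefixes are in `T`. -/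
def paths (T : Set (List Bool)) : Set (ℕ → Bool) := {x | ∀ n, seg x n ∈ T}

/-- Relative measure: `μ_τ(A) = 2^{|τ|} · μ(A ∩ ⟦τ⟧)`. -/
noncomputable def relMeasure (μ : Measure (ℕ → Bool)) (τ : List Bool)
    (A : Set (ℕ → Bool)) : ℝ :=
  2 ^ τ.length * (μ (A ∩ cyl τ)).toReal

/-- A tree is strongly positive if `μ_σ([T]) > 0` for every `σ ∈ T`. -/
def StronglyPositive (μ : Measure (ℕ → Bool)) (T : Set (List Bool)) : Prop :=
  ∀ σ ∈ T, 0 < relMeasure μ σ (paths T)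

/-- A lower density function: a nonnegative rational-valued function on a
finite nonempty domain of strings of equal length. -/
structure LDF where
  dom : Finset (List Bool)
  val : List Bool → ℚ
  dom_nonempty : dom.Nonempty
  nonneg : ∀ σ ∈ dom, 0 ≤ val σ
  eq_length : ∀ σ ∈ dom, ∀ τ ∈ dom, σ.length = τ.length

/-- `e` extends `d`: every element of `⟨e⟩` extends an element of `⟨d⟩`,
every element of `⟨d⟩` has an extension in `⟨e⟩`, and for each `σ ∈ ⟨d⟩`,
`d(σ)·2^{-|σ|} ≤ Σ_{τ ∈ ⟨e⟩, σ ⊑ τ} e(τ)·2^{-|τ|}`. -/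
def LDF.Extends (e d : LDF) : Prop :=
  (∀ τ ∈ e.dom, ∃ σ ∈ d.dom, σ <+: τ) ∧
  (∀ σ ∈ d.dom, ∃ τ ∈ e.dom, σ <+: τ) ∧
  ∀ σ ∈ d.dom, d.val σ * (2 : ℚ)⁻¹ ^ σ.length ≤
    ∑ τ ∈ e.dom.filter (fun τ => σ <+: τ), e.val τ * (2 : ℚ)⁻¹ ^ τ.length

/-- A tree `T` is `d`-dense: `⟨d⟩` is the full level of `T` at the common
length of `⟨d⟩`, and for some rational `ε > 0`, `d(σ) + ε ≤ μ_σ([T])` for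
each `σ ∈ ⟨d⟩`. -/
def LDF.DenseIn (d : LDF) (μ : Measure (ℕ → Bool)) (T : Set (List Bool)) : Prop :=
  ∃ ε : ℚ, 0 < ε ∧ (∃ l : ℕ, ∀ σ : List Bool, σ ∈ d.dom ↔ (σ ∈ T ∧ σ.length = l)) ∧
    ∀ σ ∈ d.dom, (d.val σ : ℝ) + (ε : ℝ) ≤ relMeasure μ σ (paths T)

/-- A forcing condition `(F_p, T_p, d_p)`: a lower density function `d`
(whose domain is `F`), together with an infinite, `d`-dense, strongly
positive tree `T`. -/
structure Cond (μ : Measure (ℕ → Bool)) where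
  d : LDF
  T : Set (List Bool)
  tree : IsTree T
  infinite : T.Infinite
  dense : d.DenseIn μ T
  strongPos : StronglyPositive μ T

/-- `q` extends `p`: `d_q` extends `d_p` and `T_q ⊆ T_p`. -/
def Cond.Extends {μ : Measure (ℕ → Bool)} (q p : Cond μ) : Prop :=
  q.d.Extends p.d ∧ q.T ⊆ p.T

lemma seg_length (x : ℕ → Bool) (n : ℕ) : (seg x n).length = n := by simp [seg]

lemma seg_take (x : ℕ → Bool) {m n : ℕ} (h : m ≤ n) : (seg x n).take m = seg x m := by
  apply List.ext_getElem
  · simp [seg, h]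
  · intro i h1 h2
    simp [seg]

lemma seg_prefix (x : ℕ → Bool) {m n : ℕ} (h : m ≤ n) : seg x m <+: seg x n := by
  rw [← seg_take x h]
  exact List.take_prefix _ _

lemma measurable_seg_pre (S : Set (List Bool)) (n : ℕ) : MeasurableSet {x | seg x n ∈ S} := by
  have h : Measurable (fun (x : ℕ → Bool) (i : Fin n) => x i) := by fun_prop
  exact h (Set.toFinite {f : Fin n → Bool | List.ofFn f ∈ S}).measurableSet

lemma measurable_cyl (σ : List Bool) : MeasurableSet (cyl σ) :=
  measurable_seg_pre {σ} σ.length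

lemma measurable_paths (T : Set (List Bool)) : MeasurableSet (paths T) := by
  have : paths T = ⋂ n, {x | seg x n ∈ T} := by ext x; simp [paths]
  rw [this]
  exact MeasurableSet.iInter fun n => measurable_seg_pre T n

lemma mem_cyl_of_prefix {σ τ : List Bool} (h : σ <+: τ) : cyl τ ⊆ cyl σ := by
  intro x hx
  have hx' : seg x τ.length = τ := hx
  change seg x σ.length = σ
  rw [← seg_take x h.length_le, hx']
  exact (List.prefix_iff_eq_take.1 h).symm

/-- The part of `T` comparable with an element of `G`. -/
def restr (T : Set (List Bool)) (G : Finset (List Bool)) : Set (List Bool) :=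
  {ρ | ρ ∈ T ∧ ∃ τ ∈ G, ρ <+: τ ∨ τ <+: ρ}

lemma restr_tree {T : Set (List Bool)} (hT : IsTree T) (G : Finset (List Bool)) :
    IsTree (restr T G) := by
  rintro σ ⟨h1, τ, hτ, h⟩ ρ hρ
  refine ⟨hT σ h1 ρ hρ, τ, hτ, ?_⟩
  rcases h with h | h
  · exact Or.inl (hρ.trans h)
  · exact List.prefix_or_prefix_of_prefix hρ h

lemma restr_paths {T : Set (List Bool)} {G : Finset (List Bool)} {τ : List Bool} (hτ : τ ∈ G) :
    paths T ∩ cyl τ ⊆ paths (restr T G) := by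
  rintro x ⟨hx, hxτ⟩ n
  refine ⟨hx n, τ, hτ, ?_⟩
  have hx' : seg x τ.length = τ := hxτ
  rw [← hx']
  rcases le_total n τ.length with h | h
  · exact Or.inl (seg_prefix x h)
  · exact Or.inr (seg_prefix x h)

lemma restr_sub (T : Set (List Bool)) (G : Finset (List Bool)) :
    paths (restr T G) ⊆ paths T := fun _ hx n => (hx n).1

lemma restr_inter {T : Set (List Bool)} {G : Finset (List Bool)} {τ ρ : List Bool} (hτ : τ ∈ G)
    (h : τ <+: ρ) : paths (restr T G) ∩ cyl ρ = paths T ∩ cyl ρ := by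
  apply Set.Subset.antisymm
  · exact Set.inter_subset_inter_left _ (restr_sub T G)
  · rintro x ⟨h1, h2⟩
    exact ⟨restr_paths hτ ⟨h1, mem_cyl_of_prefix h h2⟩, h2⟩


lemma real_cyl (μ : Measure (ℕ → Bool))
    (hμ : ∀ σ : List Bool, μ (cyl σ) = (2 : ENNReal)⁻¹ ^ σ.length) (σ : List Bool) : μ.real (cyl σ) = (2 : ℝ)⁻¹ ^ σ.length := by
  simp [Measure.real, hμ]

lemma prob_mu (μ : Measure (ℕ → Bool))
    (hμ : ∀ σ : List Bool, μ (cyl σ) = (2 : ENNReal)⁻¹ ^ σ.length) : IsProbabilityMeasure μ := by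
  constructor
  have : cyl [] = Set.univ := by ext x; simp [cyl, seg]
  rw [← this, hμ]; simp

lemma relMeasure_eq (μ : Measure (ℕ → Bool))
    (hμ : ∀ σ : List Bool, μ (cyl σ) = (2 : ENNReal)⁻¹ ^ σ.length) (σ : List Bool) (A : Set (ℕ → Bool)) :
    μ.real (A ∩ cyl σ) = relMeasure μ σ A * (2 : ℝ)⁻¹ ^ σ.length := by
  unfold relMeasure
  rw [mul_right_comm, ← mul_pow]
  simp [Measure.real]

lemma exists_level (μ : Measure (ℕ → Bool))
    (hμ : ∀ σ : List Bool, μ (cyl σ) = (2 : ENNReal)⁻¹ ^ σ.length) (T : Set (List Bool)) (hT : IsTree T) (η : ℝ) (hη : 0 < η) (l₀ : ℕ) :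
    ∃ l, l₀ ≤ l ∧ μ.real ({x | seg x l ∈ T} \ paths T) < η := by
  have := prob_mu μ hμ
  have hanti : Antitone (fun l => {x : ℕ → Bool | seg x l ∈ T}) := by
    intro a b hab x hx
    exact hT _ hx _ (seg_prefix x hab)
  have hI : paths T = ⋂ n, {x | seg x n ∈ T} := by ext x; simp [paths]
  have ht := tendsto_measure_iInter_atTop (μ := μ)
    (fun l => (measurable_seg_pre T l).nullMeasurableSet) hanti ⟨0, measure_ne_top _ _⟩
  rw [← hI] at ht
  have ht2 := (ENNReal.tendsto_toReal (measure_ne_top μ (paths T))).comp ht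
  have hev := ht2.eventually (gt_mem_nhds (lt_add_of_pos_right _ hη))
  obtain ⟨l, hl, hl0⟩ := (hev.and (Filter.eventually_ge_atTop l₀)).exists
  refine ⟨l, hl0, ?_⟩
  have hss : paths T ⊆ {x | seg x l ∈ T} := fun x hx => hx l
  rw [measureReal_sdiff hss (measurable_paths T)]
  simp only [Function.comp] at hl
  simp only [Measure.real]
  linarith

lemma bad_bound (μ : Measure (ℕ → Bool))
    (hμ : ∀ σ : List Bool, μ (cyl σ) = (2 : ENNReal)⁻¹ ^ σ.length) (T : Set (List Bool)) (δ η : ℝ) (l : ℕ)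
    (h : μ.real ({x | seg x l ∈ T} \ paths T) < η) (B : Finset (List Bool))
    (hB : ∀ τ ∈ B, τ ∈ T ∧ τ.length = l ∧ relMeasure μ τ (paths T) ≤ 1 - δ) :
    B.card * (δ * (2 : ℝ)⁻¹ ^ l) ≤ η := by
  have := prob_mu μ hμ
  have h1 : ∀ τ ∈ B, δ * (2 : ℝ)⁻¹ ^ l ≤ μ.real (cyl τ \ paths T) := by
    intro τ hτ
    obtain ⟨_, hl, hr⟩ := hB τ hτ
    have e1 := measureReal_sdiff_add_inter (μ := μ) (s := cyl τ) (measurable_paths T)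
    rw [Set.inter_comm, relMeasure_eq μ hμ, real_cyl μ hμ, hl] at e1
    have : (0 : ℝ) < (2 : ℝ)⁻¹ ^ l := by positivity
    nlinarith
  have h2 : μ.real (⋃ τ ∈ B, (cyl τ \ paths T)) = ∑ τ ∈ B, μ.real (cyl τ \ paths T) := by
    apply measureReal_biUnion_finset
    · intro a ha b hb hab
      refine Set.disjoint_left.2 fun x hx hx' => hab ?_
      have e1 : seg x a.length = a := hx.1
      have e2 : seg x b.length = b := hx'.1
      rw [(hB a ha).2.1] at e1
      rw [(hB b hb).2.1] at e2
      exact e1.symm.trans e2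
    · exact fun τ _ => (measurable_cyl τ).diff (measurable_paths T)
    · exact fun τ _ => measure_ne_top _ _
  have h3 : μ.real (⋃ τ ∈ B, (cyl τ \ paths T)) ≤ μ.real ({x | seg x l ∈ T} \ paths T) := by
    apply measureReal_mono _ (measure_ne_top _ _)
    intro x hx
    simp only [Set.mem_iUnion] at hx
    obtain ⟨τ, hτ, hx1, hx2⟩ := hx
    refine ⟨?_, hx2⟩
    have e1 : seg x τ.length = τ := hx1
    rw [(hB τ hτ).2.1] at e1
    change seg x l ∈ T
    rw [e1]; exact (hB τ hτ).1
  have h4 := Finset.card_nsmul_le_sum B _ _ h1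
  rw [nsmul_eq_mul] at h4
  linarith

open Classical in
lemma exists_good (μ : Measure (ℕ → Bool))
    (hμ : ∀ σ : List Bool, μ (cyl σ) = (2 : ENNReal)⁻¹ ^ σ.length) (T : Set (List Bool)) (hT : IsTree T) (δ s : ℝ) (hδ : 0 < δ) (hs : 0 < s)
    (l₀ : ℕ) : ∃ l, l₀ ≤ l ∧ ∃ G : Finset (List Bool),
      (∀ τ, τ ∈ G ↔ τ ∈ T ∧ τ.length = l ∧ 1 - δ < relMeasure μ τ (paths T)) ∧
      ∀ σ : List Bool, σ.length = l₀ →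
        (relMeasure μ σ (paths T) - s) * (2 : ℝ)⁻¹ ^ l₀ ≤
          ((G.filter (fun τ => σ <+: τ)).card : ℝ) * (2 : ℝ)⁻¹ ^ l := by
  have := prob_mu μ hμ
  obtain ⟨l, hl, hlt⟩ := exists_level μ hμ T hT (δ * (s * (2 : ℝ)⁻¹ ^ l₀)) (by positivity) l₀
  let L := (List.finite_length_eq Bool l).toFinset
  let G := L.filter (fun τ => τ ∈ T ∧ 1 - δ < relMeasure μ τ (paths T))
  let B := L.filter (fun τ => τ ∈ T ∧ relMeasure μ τ (paths T) ≤ 1 - δ)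
  have hB := bad_bound μ hμ T δ _ l hlt B (by
    intro τ hτ
    simp only [B, L, Finset.mem_filter, Set.Finite.mem_toFinset, Set.mem_ofPred_eq] at hτ
    tauto)
  have hG : ∀ τ, τ ∈ G ↔ τ ∈ T ∧ τ.length = l ∧ 1 - δ < relMeasure μ τ (paths T) := by
    intro τ
    simp only [G, L, Finset.mem_filter, Set.Finite.mem_toFinset, Set.mem_ofPred_eq]
    tauto
  refine ⟨l, hl, G, hG, ?_⟩
  intro σ hσ
  have hB' : B.card * (2 : ℝ)⁻¹ ^ l ≤ s * (2 : ℝ)⁻¹ ^ l₀ := by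
    refine le_of_mul_le_mul_left ?_ hδ
    linarith
  have hsub : paths T ∩ cyl σ ⊆ ⋃ τ ∈ (G.filter (fun τ => σ <+: τ)) ∪ B, cyl τ := by
    rintro x ⟨hx, hxσ⟩
    have hσx : seg x σ.length = σ := hxσ
    simp only [Set.mem_iUnion]
    refine ⟨seg x l, ?_, by simp [cyl, seg_length]⟩
    rw [Finset.mem_union, Finset.mem_filter, hG]
    by_cases hc : 1 - δ < relMeasure μ (seg x l) (paths T)
    · refine Or.inl ⟨⟨hx l, seg_length x l, hc⟩, ?_⟩
      rw [← hσx, hσ]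
      exact seg_prefix x hl
    · right
      simp only [B, L, Finset.mem_filter, Set.Finite.mem_toFinset, Set.mem_ofPred_eq]
      exact ⟨seg_length x l, hx l, not_lt.1 hc⟩
  have h1 := (measureReal_mono hsub (measure_ne_top μ _)).trans
    (measureReal_biUnion_finset_le _ _)
  have h2 : ∑ τ ∈ (G.filter (fun τ => σ <+: τ)) ∪ B, μ.real (cyl τ) =
      (((G.filter (fun τ => σ <+: τ)) ∪ B).card : ℝ) * (2 : ℝ)⁻¹ ^ l := by
    rw [← nsmul_eq_mul]
    apply Finset.sum_eq_card_nsmul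
    intro τ hτ
    rw [real_cyl μ hμ]
    congr 1
    rw [Finset.mem_union, Finset.mem_filter, hG] at hτ
    rcases hτ with hτ | hτ
    · exact hτ.1.2.1
    · simp only [B, L, Finset.mem_filter, Set.Finite.mem_toFinset, Set.mem_ofPred_eq] at hτ
      exact hτ.1
  rw [relMeasure_eq μ hμ, h2, hσ] at h1
  have h3 : (((G.filter (fun τ => σ <+: τ)) ∪ B).card : ℝ) ≤
      ((G.filter (fun τ => σ <+: τ)).card : ℝ) + B.card := by
    exact_mod_cast Finset.card_union_le _ _
  have h4 := mul_le_mul_of_nonneg_right h3 (show (0 : ℝ) ≤ (2 : ℝ)⁻¹ ^ l by positivity)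
  linarith

/-- **Condensation.**
For every `n` and every forcing condition `p = (F_p, T_p, d_p)`, there is a
condition `q = (F_q, T_q, d_q)` extending `p` with
`max{1 − μ_τ([T_q]) : τ ∈ F_q} < (1/(n+1)) · min{1 − d_q(τ) : τ ∈ F_q}`
(stated elementwise: for all `τ, τ' ∈ F_q`).
(`μ` is the fair-coin measure, characterized by its values on cylinders.) -/
theorem condensation (μ : Measure (ℕ → Bool))
    (hμ : ∀ σ : List Bool, μ (cyl σ) = (2 : ENNReal)⁻¹ ^ σ.length)
    (n : ℕ) (p : Cond μ) :
    ∃ q : Cond μ, q.Extends p ∧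
      ∀ τ ∈ q.d.dom, ∀ τ' ∈ q.d.dom,
        1 - relMeasure μ τ (paths q.T) <
          (1 / (n + 1) : ℝ) * (1 - (q.d.val τ' : ℝ)) := by
  classical
  have hprob := prob_mu μ hμ
  obtain ⟨d, T, hT, hinf, ⟨ε, hε, ⟨l₀, hl₀⟩, hdens⟩, hpos⟩ := p
  have hεR : (0 : ℝ) < (ε : ℝ) := by exact_mod_cast hε
  have hn : (0 : ℝ) < (n : ℝ) + 1 := by positivity
  have hrel1 : ∀ σ, relMeasure μ σ (paths T) ≤ 1 := by
    intro σ
    have e1 := relMeasure_eq μ hμ σ (paths T)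
    have e2 : μ.real (paths T ∩ cyl σ) ≤ μ.real (cyl σ) :=
      measureReal_mono Set.inter_subset_right (measure_ne_top _ _)
    rw [e1, real_cyl μ hμ] at e2
    have : (0 : ℝ) < (2 : ℝ)⁻¹ ^ σ.length := by positivity
    by_contra hc
    nlinarith
  obtain ⟨l, hl, G, hG, hsum⟩ := exists_good μ hμ T hT (ε / (4 * (n + 1))) (ε / 2)
    (by positivity) (by positivity) l₀
  have hδ4 : (ε : ℝ) / (4 * (n + 1)) ≤ ε / 4 := by
    apply div_le_div_of_nonneg_left hεR.le (by norm_num)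
    have : (0 : ℝ) ≤ n := by positivity
    linarith
  have hcard : ∀ σ ∈ d.dom, (1 - (ε : ℝ) / 2) * (((G.filter (fun τ => σ <+: τ)).card : ℝ)
      * (2 : ℝ)⁻¹ ^ l) ≥ d.val σ * (2 : ℝ)⁻¹ ^ l₀ ∧
      0 < (G.filter (fun τ => σ <+: τ)).card ∧ (ε : ℝ) ≤ 1 := by
    intro σ hσ
    have h1 := hsum σ ((hl₀ σ).1 hσ).2
    have h2 := hdens σ hσ
    have h3 := hrel1 σ
    have h0 : (0 : ℝ) ≤ d.val σ := by exact_mod_cast d.nonneg σ hσ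
    have hp : (0 : ℝ) < (2 : ℝ)⁻¹ ^ l₀ := by positivity
    have hle : (ε : ℝ) ≤ 1 := by linarith
    refine ⟨?_, ?_, hle⟩
    · have h4 : ((d.val σ : ℝ) + ε / 2) * (2 : ℝ)⁻¹ ^ l₀ ≤
          ((G.filter (fun τ => σ <+: τ)).card : ℝ) * (2 : ℝ)⁻¹ ^ l := by
        refine le_trans ?_ h1
        apply mul_le_mul_of_nonneg_right _ hp.le
        linarith
      have h5 := mul_le_mul_of_nonneg_left h4 (show (0 : ℝ) ≤ 1 - ε / 2 by linarith)
      refine le_trans ?_ h5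
      rw [← mul_assoc]
      apply mul_le_mul_of_nonneg_right _ hp.le
      nlinarith
    · by_contra hc
      have hc0 : (G.filter (fun τ => σ <+: τ)).card = 0 := by omega
      rw [hc0] at h1
      have : 0 < (relMeasure μ σ (paths T) - ε / 2) * (2 : ℝ)⁻¹ ^ l₀ := by
        apply mul_pos _ hp
        linarith
      simp only [Nat.cast_zero, zero_mul] at h1
      linarith
  obtain ⟨σ₀, hσ₀⟩ := d.dom_nonempty
  have hε1 : (ε : ℝ) ≤ 1 := (hcard σ₀ hσ₀).2.2
  have hext : ∀ σ ∈ d.dom, ∃ τ ∈ G, σ <+: τ := by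
    intro σ hσ
    obtain ⟨τ, hτ⟩ := Finset.card_pos.1 (hcard σ hσ).2.1
    rw [Finset.mem_filter] at hτ
    exact ⟨τ, hτ.1, hτ.2⟩
  obtain ⟨τ₀, hτ₀, _⟩ := hext σ₀ hσ₀
  have hrelG : ∀ τ ∈ G, relMeasure μ τ (paths (restr T G)) = relMeasure μ τ (paths T) := by
    intro τ hτ
    unfold relMeasure
    rw [restr_inter hτ List.prefix_rfl]
  have hstr : StronglyPositive μ (restr T G) := by
    rintro ρ ⟨hρ, τ, hτ, h⟩
    rcases h with h | h
    · have h1 := hpos τ ((hG τ).1 hτ).1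
      have h2 : 0 < μ.real (paths T ∩ cyl τ) := by
        rw [relMeasure_eq μ hμ]; positivity
      have h3 : μ.real (paths T ∩ cyl τ) ≤ μ.real (paths (restr T G) ∩ cyl ρ) := by
        apply measureReal_mono _ (measure_ne_top _ _)
        intro x hx
        exact ⟨restr_paths hτ hx, mem_cyl_of_prefix h hx.2⟩
      have h4 := lt_of_lt_of_le h2 h3
      unfold relMeasure
      exact mul_pos (by positivity) h4
    · have := hpos ρ hρ
      unfold relMeasure at this ⊢
      rwa [restr_inter hτ h]
  have hinf' : (restr T G).Infinite := by
    have h1 := hpos τ₀ ((hG τ₀).1 hτ₀).1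
    have hne : (paths T ∩ cyl τ₀).Nonempty := by
      rw [Set.nonempty_iff_ne_empty]
      intro he
      unfold relMeasure at h1
      rw [he] at h1
      simp at h1
    obtain ⟨x, hx⟩ := hne
    apply Set.infinite_of_injective_forall_mem (f := seg x)
    · intro a b hab
      have := congrArg List.length hab
      simpa [seg_length] using this
    · exact restr_paths hτ₀ hx
  have hmem : ∀ σ, σ ∈ G ↔ (σ ∈ restr T G ∧ σ.length = l) := by
    intro σ
    constructor
    · intro h
      exact ⟨⟨((hG σ).1 h).1, σ, h, Or.inl List.prefix_rfl⟩, ((hG σ).1 h).2.1⟩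
    · rintro ⟨⟨_, τ, hτ, h⟩, hlen⟩
      have hτl := ((hG τ).1 hτ).2.1
      have : σ = τ := by
        rcases h with h | h
        · exact h.eq_of_length (by omega)
        · exact (h.eq_of_length (by omega)).symm
      rw [this]; exact hτ
  let dq : LDF :=
    { dom := G
      val := fun _ => 1 - ε / 2
      dom_nonempty := ⟨τ₀, hτ₀⟩
      nonneg := by
        intro σ _
        have : ε ≤ 1 := by exact_mod_cast hε1
        linarith
      eq_length := by
        intro σ hσ τ hτ
        rw [((hG σ).1 hσ).2.1, ((hG τ).1 hτ).2.1] }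
  let q : Cond μ :=
    { d := dq
      T := restr T G
      tree := restr_tree hT G
      infinite := hinf'
      dense := by
        refine ⟨ε / 4, by positivity, ⟨l, hmem⟩, ?_⟩
        intro σ hσ
        rw [hrelG σ hσ]
        have := ((hG σ).1 hσ).2.2
        simp only [dq]
        push_cast
        linarith
      strongPos := hstr }
  refine ⟨q, ⟨⟨?_, hext, ?_⟩, fun ρ hρ => hρ.1⟩, ?_⟩
  · intro τ hτ
    obtain ⟨h1, h2, _⟩ := (hG τ).1 hτ
    refine ⟨τ.take l₀, (hl₀ _).2 ⟨hT τ h1 _ (List.take_prefix _ _), ?_⟩, List.take_prefix _ _⟩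
    rw [List.length_take, h2]; omega
  · intro σ hσ
    have h1 := (hcard σ hσ).1
    have h2 : ∑ τ ∈ G.filter (fun τ => σ <+: τ), (1 - ε / 2) * (2 : ℚ)⁻¹ ^ τ.length =
        ((G.filter (fun τ => σ <+: τ)).card : ℚ) * ((1 - ε / 2) * (2 : ℚ)⁻¹ ^ l) := by
      rw [← nsmul_eq_mul]
      apply Finset.sum_eq_card_nsmul
      intro τ hτ
      rw [((hG τ).1 (Finset.mem_filter.1 hτ).1).2.1]
    change d.val σ * (2 : ℚ)⁻¹ ^ σ.length ≤
      ∑ τ ∈ G.filter (fun τ => σ <+: τ), (1 - ε / 2) * (2 : ℚ)⁻¹ ^ τ.length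
    have h3 : d.val σ * (2 : ℚ)⁻¹ ^ σ.length ≤
        ((G.filter (fun τ => σ <+: τ)).card : ℚ) * ((1 - ε / 2) * (2 : ℚ)⁻¹ ^ l) := by
      rw [((hl₀ σ).1 hσ).2]
      have h4 : (d.val σ : ℝ) * (2 : ℝ)⁻¹ ^ l₀ ≤
          ((G.filter (fun τ => σ <+: τ)).card : ℝ) * ((1 - ε / 2) * (2 : ℝ)⁻¹ ^ l) := by
        linarith
      rw [← Rat.cast_le (K := ℝ)]
      push_cast
      exact h4
    rw [← h2] at h3
    convert h3
  · intro τ hτ τ' _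
    change 1 - relMeasure μ τ (paths (restr T G)) <
      (1 / (n + 1) : ℝ) * (1 - ((1 - ε / 2 : ℚ) : ℝ))
    rw [hrelG τ hτ]
    have h1 := ((hG τ).1 hτ).2.2
    have h2 : (1 / (n + 1) : ℝ) * (1 - ((1 - ε / 2 : ℚ) : ℝ)) = 2 * (ε / (4 * (n + 1))) := by
      push_cast
      field_simp
      ring
    have h3 : (0 : ℝ) < ε / (4 * (n + 1)) := by positivity
    rw [h2]
    linarith
end
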